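/- arXiv:1207.2813 — 4 statements merged into one kernel-verified Lean document; each statement's English description precedes it below -/
import Mathlib

section
/- Let A₁, A₂ : ℝ² → ℝ and Φ : ℝ² → ℂ be smooth. Then pointwise on ℝ²: |D₁Φ|² + |D₂Φ|² = |D₁Φ + iD₂Φ|² + (∂₁A₂ − ∂₂A₁)|Φ|² − ∂₁⟨Φ, iD₂Φ⟩ + ∂₂⟨Φ, iD₁Φ⟩, where ⟨u,v⟩ = Re(ū v). In other words, the covariant Dirichlet density equals 4|∂̄_AΦ|² plus the curvature density F|Φ|² plus an exact divergence built from the supercurrent components ⟨Φ, iD_jΦ⟩. -/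
/-!
Write `u = D₁Φ`, `v = D₂Φ`. Expanding the square gives `|u + iv|² = |u|² + |v|² + 2⟨u, iv⟩`, so the claim
is that `-∂₁⟨Φ, iv⟩ + ∂₂⟨Φ, iu⟩ = -2⟨u, iv⟩ - F|Φ|²`. The product rule (`fderiv_rip_covD`) expands
the left side. The second derivatives of `Φ` enter only through `∂₁∂₂Φ - ∂₂∂₁Φ`, which vanishes by
symmetry of the second derivative; the derivatives of `A₁`, `A₂` assemble into `F`. What is left is a
polynomial identity in real and imaginary parts.
-/

open Complex

/-- The covariant derivative `D_A` in direction `e`: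
`D f = (∂_e f) - i A f`. -/
noncomputable def covD (A : ℝ × ℝ → ℝ) (e : ℝ × ℝ) (f : ℝ × ℝ → ℂ) :
    ℝ × ℝ → ℂ :=
  fun x => fderiv ℝ f x e - Complex.I * (A x : ℂ) * f x

/-- The real inner product `⟨u, v⟩ = Re (conj u * v)` on `ℂ`. -/
noncomputable def rip (u v : ℂ) : ℝ := ((starRingEnd ℂ) u * v).re

/-- Product rule for the supercurrent component `⟨Φ, i D_e Φ⟩`, differentiated in direction `d`. -/
lemma fderiv_rip_covD (A : ℝ × ℝ → ℝ) (Φ : ℝ × ℝ → ℂ) (x d e : ℝ × ℝ)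
    (hA : DifferentiableAt ℝ A x) (hΦ : DifferentiableAt ℝ Φ x)
    (hΦ' : DifferentiableAt ℝ (fderiv ℝ Φ) x) :
    fderiv ℝ (fun y => rip (Φ y) (Complex.I * covD A e Φ y)) x d
      = rip (fderiv ℝ Φ x d) (Complex.I * covD A e Φ x)
        + rip (Φ x) (Complex.I * (fderiv ℝ (fderiv ℝ Φ) x d e
            - Complex.I * ((fderiv ℝ A x d : ℂ) * Φ x + (A x : ℂ) * fderiv ℝ Φ x d))) := by
  have h1 : HasFDerivAt (fun y => fderiv ℝ Φ y e) ((fderiv ℝ (fderiv ℝ Φ) x).flip e) x := by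
    simpa using hΦ'.hasFDerivAt.clm_apply (hasFDerivAt_const e x)
  have h2 : HasFDerivAt (fun y => (A y : ℂ)) (Complex.ofRealCLM.comp (fderiv ℝ A x)) x :=
    Complex.ofRealCLM.hasFDerivAt.comp x hA.hasFDerivAt
  have h3 : HasFDerivAt (fun y => (starRingEnd ℂ) (Φ y))
      ((Complex.conjCLE : ℂ →L[ℝ] ℂ).comp (fderiv ℝ Φ x)) x :=
    (Complex.conjCLE : ℂ →L[ℝ] ℂ).hasFDerivAt.comp x hΦ.hasFDerivAt
  have h4 := h3.mul ((h1.sub ((h2.const_mul Complex.I).mul hΦ.hasFDerivAt)).const_mul Complex.I)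
  have h5 : HasFDerivAt (fun y => rip (Φ y) (Complex.I * covD A e Φ y)) _ x :=
    Complex.reCLM.hasFDerivAt.comp x h4
  rw [h5.fderiv]
  simp [rip, covD]
  ring

/-- Pointwise Bogomolny identity for the covariant Dirichlet density:
`|D₁Φ|² + |D₂Φ|² = |D₁Φ + iD₂Φ|² + (∂₁A₂ - ∂₂A₁)|Φ|²
  - ∂₁⟨Φ, iD₂Φ⟩ + ∂₂⟨Φ, iD₁Φ⟩`. -/
theorem dirichlet_density_bogomolny_identity
    (A₁ A₂ : ℝ × ℝ → ℝ) (Φ : ℝ × ℝ → ℂ)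
    (hA₁ : ContDiff ℝ (⊤ : ℕ∞) A₁) (hA₂ : ContDiff ℝ (⊤ : ℕ∞) A₂) (hΦ : ContDiff ℝ (⊤ : ℕ∞) Φ) :
    ∀ x : ℝ × ℝ,
      ‖covD A₁ (1, 0) Φ x‖ ^ 2 + ‖covD A₂ (0, 1) Φ x‖ ^ 2
      = ‖covD A₁ (1, 0) Φ x + Complex.I * covD A₂ (0, 1) Φ x‖ ^ 2
        + (fderiv ℝ A₂ x (1, 0) - fderiv ℝ A₁ x (0, 1)) * ‖Φ x‖ ^ 2
        - fderiv ℝ (fun y => rip (Φ y) (Complex.I * covD A₂ (0, 1) Φ y)) x (1, 0)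
        + fderiv ℝ (fun y => rip (Φ y) (Complex.I * covD A₁ (1, 0) Φ y)) x (0, 1) := by
  intro x
  have hd : Differentiable ℝ (fderiv ℝ Φ) :=
    (hΦ.fderiv_right (m := 1) (by norm_cast)).differentiable (by simp)
  have hsymm : fderiv ℝ (fderiv ℝ Φ) x (1, 0) (0, 1) = fderiv ℝ (fderiv ℝ Φ) x (0, 1) (1, 0) :=
    (hΦ.contDiffAt.isSymmSndFDerivAt (by simpa using WithTop.coe_le_coe.2 (le_top : (2 : ℕ∞) ≤ ⊤))).eq _ _
  rw [fderiv_rip_covD A₂ Φ x _ _ (hA₂.differentiable (by simp) x)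
      (hΦ.differentiable (by simp) x) (hd x),
    fderiv_rip_covD A₁ Φ x _ _ (hA₁.differentiable (by simp) x)
      (hΦ.differentiable (by simp) x) (hd x), hsymm]
  simp only [Complex.sq_norm, Complex.normSq_apply, rip, covD]
  simp
  ring
end

section
/- (Bradlow obstruction.) Let (X, μ) be a measure space with μ(X) < ∞, let N > 0 be a real number, let B : X → ℝ be integrable with ∫_X B dμ = 2πN, and let f : X → ℝ be a nonnegative integrable function such that B = (1/2)(1 − f) holds μ-almost everywhere. Then μ(X) ≥ 4πN, and moreover ∫_X f dμ = μ(X) − 4πN. In particular, if μ(X) < 4πN then no such pair (B, f) exists. -/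
open MeasureTheory Real

/-- Bradlow's obstruction: if `∫ B dμ = 2πN`, `f ≥ 0` is integrable, and
`B = ½(1 - f)` a.e., then `μ(X) ≥ 4πN` and `∫ f dμ = μ(X) - 4πN`.
In particular no such pair exists when `μ(X) < 4πN`. -/
theorem bradlow_obstruction
    {X : Type*} [MeasurableSpace X] (μ : Measure X) [IsFiniteMeasure μ]
    (N : ℝ) (hN : 0 < N)
    (B f : X → ℝ) (hB : Integrable B μ) (hBint : ∫ x, B x ∂μ = 2 * π * N)
    (hf : Integrable f μ) (hf0 : ∀ x, 0 ≤ f x)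
    (hBog : ∀ᵐ x ∂μ, B x = (1 / 2) * (1 - f x)) :
    (μ Set.univ).toReal ≥ 4 * π * N ∧
      ∫ x, f x ∂μ = (μ Set.univ).toReal - 4 * π * N := by
  have hint : ∫ x, B x ∂μ = (1 / 2) * ((μ Set.univ).toReal - ∫ x, f x ∂μ) := by
    rw [integral_congr_ae hBog, integral_const_mul, integral_sub (integrable_const 1) hf]
    simp [Measure.real]
  have hnonneg : 0 ≤ ∫ x, f x ∂μ := integral_nonneg hf0
  constructor <;> linarith
end

section
/- (Abstract local existence of mild solutions.) Let X and Y be real Banach spaces, J : X → Y a continuous linear map, and S : (0, ∞) → L(Y, X) a family of continuous linear operators such that: (i) S(t) ∘ J ∘ S(s) = S(t+s) for all s, t > 0; (ii) ‖S(t)(Jx)‖_X ≤ ‖x‖_X for all t > 0 and x ∈ X; (iii) there is C > 0 with ‖S(t)‖_{L(Y,X)} ≤ C t^{−3/4} for 0 < t ≤ 1; (iv) for every x ∈ X, the map t ↦ S(t)(Jx) on (0, ∞) tends to x in X as t → 0⁺ and is continuous. Let F : X → Y be such that for every R > 0 there is K(R) > 0 with ‖F(x₁) − F(x₂)‖_Y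 ≤ K(R)‖x₁ − x₂‖_X whenever ‖x₁‖_X ≤ R and ‖x₂‖_X ≤ R. Then for every R > 0 there exists T > 0 such that for every u₀ ∈ X with ‖u₀‖_X ≤ R there is a unique continuous map u : [0, T] → X with u(0) = u₀ satisfying the mild (integral) equation u(t) = S(t)(Ju₀) + ∫₀ᵗ S(t−s)(F(u(s))) ds for all t ∈ (0, T], the Bochner integral being absolutely convergent since 3/4 < 1. -/
open MeasureTheory intervalIntegral Set Filter Topology

/-!
The solution is the fixed point of `u ↦ S(·)Ju₀ + ∫₀^· S(· - s) F(u s) ds` on the closed ball of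
radius `2R` of `C([0, T], X)`. The kernel `r^{-3/4}` has integral `4 t^{1/4}` over `[0, t]`
(`norm_duhamel_le`), so for small `T ≤ 1`, depending only on `R`, the map preserves the ball and is
a `1/2`-contraction there. That it takes values in continuous functions is `continuousOn_duhamel`
(dominated convergence), which rests on the joint continuity of `(r, y) ↦ S r y` for `r > 0`
(`continuousOn_semigroup_apply`, from the semigroup law and contractivity).

Uniqueness among all continuous solutions, not only those in the ball: as long as a solution is
bounded by `2R` the same estimate bounds it by `3R/2`, so it never leaves the ball
(`le_of_continuation`), and the contraction estimate at a maximum point of the difference of two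
solutions makes it zero.
-/

/-- Joint continuity of `(r, y) ↦ S r y` for `r > 0`. Near `r₀`, the factorisation
`S r = S (r - a) ∘ J ∘ S a` with `a = r₀ / 2` gives both strong continuity in `r` and, by
contractivity, the uniform bound `‖S r y‖ ≤ ‖S a y‖`. -/
lemma continuousOn_semigroup_apply {X Y : Type*}
    [NormedAddCommGroup X] [NormedSpace ℝ X]
    [NormedAddCommGroup Y] [NormedSpace ℝ Y]
    {J : X →L[ℝ] Y} {S : ℝ → Y →L[ℝ] X}
    (hsemi : ∀ s t : ℝ, 0 < s → 0 < t → ∀ y : Y, S t (J (S s y)) = S (t + s) y)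
    (hcontr : ∀ t : ℝ, 0 < t → ∀ x : X, ‖S t (J x)‖ ≤ ‖x‖)
    (hcont : ∀ x : X, ContinuousOn (fun t => S t (J x)) (Ioi (0 : ℝ))) :
    ContinuousOn (fun p : ℝ × Y => S p.1 p.2) (Ioi (0 : ℝ) ×ˢ univ) := by
  rintro ⟨r₀, y₀⟩ ⟨hr₀, -⟩
  have hr₀ : 0 < r₀ := hr₀
  apply ContinuousAt.continuousWithinAt
  have ha : 0 < r₀ / 2 := by positivity
  have hfac : ∀ r, r₀ / 2 < r → ∀ y, S r y = S (r - r₀ / 2) (J (S (r₀ / 2) y)) := by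
    intro r hr y
    rw [hsemi _ _ ha (by linarith)]
    congr 2; ring
  have hnear : ∀ᶠ p : ℝ × Y in 𝓝 (r₀, y₀), r₀ / 2 < p.1 :=
    continuous_fst.continuousAt.eventually (lt_mem_nhds (by simp; linarith))
  have h1 : Tendsto (fun p : ℝ × Y => S p.1 p.2 - S p.1 y₀) (𝓝 (r₀, y₀)) (𝓝 0) := by
    have hb : Tendsto (fun p : ℝ × Y => ‖S (r₀ / 2) (p.2 - y₀)‖) (𝓝 (r₀, y₀)) (𝓝 0) := by
      have : Continuous (fun p : ℝ × Y => ‖S (r₀ / 2) (p.2 - y₀)‖) := by fun_prop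
      simpa using this.tendsto (r₀, y₀)
    refine squeeze_zero_norm' ?_ hb
    filter_upwards [hnear] with p hp
    rw [← map_sub, hfac _ hp]
    exact hcontr _ (by linarith) _
  have h2 : Tendsto (fun p : ℝ × Y => S p.1 y₀) (𝓝 (r₀, y₀)) (𝓝 (S r₀ y₀)) := by
    have hc : ContinuousAt (fun t => S t (J (S (r₀ / 2) y₀))) (r₀ - r₀ / 2) :=
      (hcont _).continuousAt (Ioi_mem_nhds (by linarith))
    have hs : Tendsto (fun p : ℝ × Y => p.1 - r₀ / 2) (𝓝 (r₀, y₀)) (𝓝 (r₀ - r₀ / 2)) := by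
      have : Continuous (fun p : ℝ × Y => p.1 - r₀ / 2) := by fun_prop
      simpa using this.tendsto (r₀, y₀)
    have := hc.tendsto.comp hs
    rw [← hfac r₀ (by linarith)] at this
    refine this.congr' ?_
    filter_upwards [hnear] with p hp
    exact (hfac _ hp _).symm
  simpa [ContinuousAt] using h1.add h2

lemma intervalIntegrable_kernel (t : ℝ) :
    IntervalIntegrable (fun s : ℝ => (t - s) ^ (-(3 / 4 : ℝ))) volume 0 t := by
  have h : IntervalIntegrable (fun s : ℝ => s ^ (-(3 / 4 : ℝ))) volume t 0 :=
    intervalIntegral.intervalIntegrable_rpow' (by norm_num)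
  simpa using h.comp_sub_left t

lemma integral_kernel (t : ℝ) :
    ∫ s in (0 : ℝ)..t, (t - s) ^ (-(3 / 4 : ℝ)) = 4 * t ^ (1 / 4 : ℝ) := by
  rw [intervalIntegral.integral_comp_sub_left (fun s : ℝ => s ^ (-(3 / 4 : ℝ))),
    integral_rpow (Or.inl (by norm_num))]
  norm_num
  ring

lemma norm_kernel_apply_le {X Y : Type*}
    [NormedAddCommGroup X] [NormedSpace ℝ X]
    [NormedAddCommGroup Y] [NormedSpace ℝ Y]
    {S : ℝ → Y →L[ℝ] X} {C M : ℝ}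
    (hS : ∀ t : ℝ, 0 < t → t ≤ 1 → ‖S t‖ ≤ C * t ^ (-(3 / 4 : ℝ)))
    {r : ℝ} (hr : 0 < r) (hr1 : r ≤ 1) {y : Y} (hy : ‖y‖ ≤ M) :
    ‖S r y‖ ≤ C * M * r ^ (-(3 / 4 : ℝ)) := by
  have h := hS r hr hr1
  calc ‖S r y‖ ≤ ‖S r‖ * ‖y‖ := (S r).le_opNorm y
    _ ≤ (C * r ^ (-(3 / 4 : ℝ))) * M :=
      mul_le_mul h hy (norm_nonneg _) ((norm_nonneg _).trans h)
    _ = _ := by ring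

/-- The basic Duhamel estimate; the integrability of the singularity yields a power of `t`. -/
lemma norm_duhamel_le {X Y : Type*}
    [NormedAddCommGroup X] [NormedSpace ℝ X]
    [NormedAddCommGroup Y] [NormedSpace ℝ Y]
    {S : ℝ → Y →L[ℝ] X} {C M : ℝ}
    (hS : ∀ t : ℝ, 0 < t → t ≤ 1 → ‖S t‖ ≤ C * t ^ (-(3 / 4 : ℝ)))
    {t : ℝ} (ht : 0 ≤ t) (ht1 : t ≤ 1) {f : ℝ → Y} (hf : ∀ s ∈ Ioo 0 t, ‖f s‖ ≤ M) :
    ‖∫ s in (0 : ℝ)..t, S (t - s) (f s)‖ ≤ 4 * C * M * t ^ (1 / 4 : ℝ) := by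
  have h := intervalIntegral.norm_integral_le_of_norm_le (f := fun s => S (t - s) (f s))
    (g := fun s => C * M * (t - s) ^ (-(3 / 4 : ℝ))) (μ := volume) ht ?_
    ((intervalIntegrable_kernel t).const_mul (C * M))
  · rw [intervalIntegral.integral_const_mul, integral_kernel] at h
    linarith
  · filter_upwards [compl_mem_ae_iff.mpr (measure_singleton t)] with s hs hst
    have hlt : s < t := lt_of_le_of_ne hst.2 hs
    exact norm_kernel_apply_le hS (by linarith) (by linarith [hst.1]) (hf s ⟨hst.1, hlt⟩)

lemma intervalIntegrable_duhamel {X Y : Type*}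
    [NormedAddCommGroup X] [NormedSpace ℝ X]
    [NormedAddCommGroup Y] [NormedSpace ℝ Y]
    {S : ℝ → Y →L[ℝ] X} {C M : ℝ}
    (hjoint : ContinuousOn (fun p : ℝ × Y => S p.1 p.2) (Ioi (0 : ℝ) ×ˢ univ))
    (hS : ∀ t : ℝ, 0 < t → t ≤ 1 → ‖S t‖ ≤ C * t ^ (-(3 / 4 : ℝ)))
    {t : ℝ} (ht : 0 ≤ t) (ht1 : t ≤ 1) {f : ℝ → Y} (hfc : ContinuousOn f (Ioo 0 t))
    (hf : ∀ s ∈ Ioo 0 t, ‖f s‖ ≤ M) :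
    IntervalIntegrable (fun s => S (t - s) (f s)) volume 0 t := by
  have hk := (intervalIntegrable_kernel t).const_mul (C * M)
  rw [intervalIntegrable_iff_integrableOn_Ioo_of_le ht] at hk ⊢
  refine hk.mono' ?_ ?_
  · refine ContinuousOn.aestronglyMeasurable ?_ measurableSet_Ioo
    refine hjoint.comp (f := fun s => (t - s, f s)) (by fun_prop) ?_
    intro s hs
    exact ⟨sub_pos.mpr hs.2, mem_univ _⟩
  · refine (ae_restrict_iff' measurableSet_Ioo).mpr (Eventually.of_forall fun s hs => ?_)
    exact norm_kernel_apply_le hS (by linarith [hs.2]) (by linarith [hs.1]) (hf s hs)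

/-- Continuity in `t` of the Duhamel term. After the reflection `r = t - s` the integrand
`𝟙_{0 < r < t} S r (f (t - r))` is continuous in `t` for every `r ≠ t` and dominated by
`C M r^{-3/4}`, so dominated convergence applies. -/
lemma continuousOn_duhamel {X Y : Type*}
    [NormedAddCommGroup X] [NormedSpace ℝ X]
    [NormedAddCommGroup Y] [NormedSpace ℝ Y]
    {S : ℝ → Y →L[ℝ] X} {C M : ℝ}
    (hjoint : ContinuousOn (fun p : ℝ × Y => S p.1 p.2) (Ioi (0 : ℝ) ×ˢ univ))
    (hS : ∀ t : ℝ, 0 < t → t ≤ 1 → ‖S t‖ ≤ C * t ^ (-(3 / 4 : ℝ)))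
    {f : ℝ → Y} (hfc : Continuous f) (hf : ∀ s, ‖f s‖ ≤ M) :
    ContinuousOn (fun t => ∫ s in (0 : ℝ)..t, S (t - s) (f s)) (Icc 0 1) := by
  let G : ℝ → ℝ → X := fun t => (Ioo 0 t).indicator fun r => S r (f (t - r))
  have hG : ∀ t ∈ Icc (0 : ℝ) 1, ∫ s in (0 : ℝ)..t, S (t - s) (f s)
      = ∫ r in Ioo (0 : ℝ) 1, G t r := by
    intro t ht
    have h := intervalIntegral.integral_comp_sub_left (a := 0) (b := t)
      (fun r => S r (f (t - r))) t
    simp only [sub_sub_cancel, sub_self, sub_zero] at h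
    rw [h, intervalIntegral.integral_of_le ht.1, integral_Ioc_eq_integral_Ioo,
      setIntegral_indicator measurableSet_Ioo,
      inter_eq_right.mpr (Ioo_subset_Ioo_right ht.2)]
  have hC : ∀ t, ContinuousOn (fun r => S r (f (t - r))) (Ioi 0) := fun t =>
    hjoint.comp (f := fun r => (r, f (t - r))) (by fun_prop) fun r hr => ⟨hr, mem_univ _⟩
  have hCM : ∀ r ∈ Ioo (0 : ℝ) 1, ∀ y : Y, ‖y‖ ≤ M → ‖S r y‖ ≤ C * M * r ^ (-(3 / 4 : ℝ)) :=
    fun r hr y hy => norm_kernel_apply_le hS hr.1 hr.2.le hy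
  refine ContinuousOn.congr ?_ hG
  intro t₀ ht₀
  refine continuousWithinAt_of_dominated (bound := fun r => C * M * r ^ (-(3 / 4 : ℝ)))
    ?_ ?_ ?_ ?_
  · refine Eventually.of_forall fun t => AEStronglyMeasurable.restrict ?_
    rw [aestronglyMeasurable_indicator_iff measurableSet_Ioo]
    exact ((hC t).mono Ioo_subset_Ioi_self).aestronglyMeasurable measurableSet_Ioo
  · refine Eventually.of_forall fun t =>
      (ae_restrict_iff' measurableSet_Ioo).mpr (Eventually.of_forall fun r hr => ?_)
    exact (norm_indicator_le_norm_self (fun r => S r (f (t - r))) r).trans (hCM r hr _ (hf _))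
  · have h : IntervalIntegrable (fun s : ℝ => s ^ (-(3 / 4 : ℝ))) volume 0 1 :=
      intervalIntegral.intervalIntegrable_rpow' (by norm_num)
    rw [intervalIntegrable_iff_integrableOn_Ioo_of_le zero_le_one] at h
    exact h.const_mul _
  · rw [ae_restrict_iff' measurableSet_Ioo]
    filter_upwards [compl_mem_ae_iff.mpr (measure_singleton t₀)] with r hr hr01
    apply ContinuousAt.continuousWithinAt
    rcases lt_or_gt_of_ne (show r ≠ t₀ from hr) with hlt | hgt
    · have hc : ContinuousAt (fun t => S r (f (t - r))) t₀ := by fun_prop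
      refine hc.congr ?_
      filter_upwards [lt_mem_nhds hlt] with t ht
      exact (indicator_of_mem (show r ∈ Ioo 0 t from ⟨hr01.1, ht⟩)
        (fun r => S r (f (t - r)))).symm
    · refine (continuousAt_const (y := (0 : X))).congr ?_
      filter_upwards [gt_mem_nhds hgt] with t ht
      exact (indicator_of_notMem (fun h : r ∈ Ioo 0 t => lt_asymm ht h.2)
        (fun r => S r (f (t - r)))).symm

/-- The free evolution, extended by its limit `u₀` at time `0`, is continuous. -/
lemma continuousOn_orbit {X Y : Type*}
    [NormedAddCommGroup X] [NormedSpace ℝ X]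
    [NormedAddCommGroup Y] [NormedSpace ℝ Y]
    {J : X →L[ℝ] Y} {S : ℝ → Y →L[ℝ] X} {x : X}
    (hlim : Tendsto (fun t => S t (J x)) (𝓝[>] (0 : ℝ)) (𝓝 x))
    (hcont : ContinuousOn (fun t => S t (J x)) (Ioi (0 : ℝ))) :
    ContinuousOn (fun t : ℝ => if t = 0 then x else S t (J x)) (Ici 0) := by
  intro t ht
  rcases eq_or_lt_of_le (show 0 ≤ t from ht) with rfl | hpos
  · rw [← continuousWithinAt_Ioi_iff_Ici]
    simp only [ContinuousWithinAt, if_true]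
    refine hlim.congr' ?_
    filter_upwards [self_mem_nhdsWithin] with s hs
    rw [if_neg (ne_of_gt hs)]
  · apply ContinuousAt.continuousWithinAt
    refine (hcont.continuousAt (Ioi_mem_nhds hpos)).congr ?_
    filter_upwards [lt_mem_nhds hpos] with s hs
    rw [if_neg (ne_of_gt hs)]

/-- Continuation argument: if a bound by `2R` before time `t` always improves to a bound by `3R/2`
at time `t`, then the bound by `2R` holds throughout. Consider the first time `2R` is reached. -/
lemma le_of_continuation {T R : ℝ} (hR : 0 < R) {φ : ℝ → ℝ} (hφ : ContinuousOn φ (Icc 0 T))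
    (h : ∀ t ∈ Icc (0 : ℝ) T, (∀ s ∈ Ioo 0 t, φ s ≤ 2 * R) → φ t ≤ R + R / 2) :
    ∀ t ∈ Icc (0 : ℝ) T, φ t ≤ 2 * R := by
  by_contra! hne
  obtain ⟨t, ht, htR⟩ := hne
  let A : Set ℝ := Icc 0 T ∩ φ ⁻¹' Ici (2 * R)
  have hA : IsCompact A :=
    isCompact_Icc.of_isClosed_subset (hφ.preimage_isClosed_of_isClosed isClosed_Icc isClosed_Ici)
      inter_subset_left
  obtain ⟨t₁, ⟨ht₁, hφ₁⟩, hmin⟩ := hA.exists_isLeast ⟨t, ht, htR.le⟩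
  have hφ₁ : 2 * R ≤ φ t₁ := hφ₁
  have := h t₁ ht₁ fun s hs => by
    by_contra! hs2
    exact absurd (hmin (show s ∈ A from ⟨⟨hs.1.le, hs.2.le.trans ht₁.2⟩, hs2.le⟩))
      (not_le.mpr hs.2)
  linarith

/-- Abstract local existence of mild solutions `u(t) = S(t)Ju₀ + ∫₀ᵗ S(t-s)F(u(s)) ds`
for a semigroup `S` with smoothing bound `‖S(t)‖ ≤ C t^{-3/4}` and a nonlinearity `F`
that is Lipschitz on bounded sets.  The local existence time `T` and the solution are
unique among continuous maps `[0,T] → X` with the given initial value. -/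
theorem abstract_mild_local_existence
    {X Y : Type*}
    [NormedAddCommGroup X] [NormedSpace ℝ X] [CompleteSpace X]
    [NormedAddCommGroup Y] [NormedSpace ℝ Y] [CompleteSpace Y]
    (J : X →L[ℝ] Y) (S : ℝ → Y →L[ℝ] X)
    (hsemi : ∀ s t : ℝ, 0 < s → 0 < t → ∀ y : Y, S t (J (S s y)) = S (t + s) y)
    (hcontr : ∀ t : ℝ, 0 < t → ∀ x : X, ‖S t (J x)‖ ≤ ‖x‖)
    (hsmooth : ∃ C : ℝ, 0 < C ∧ ∀ t : ℝ, 0 < t → t ≤ 1 →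
      ‖S t‖ ≤ C * t ^ (-(3 / 4 : ℝ)))
    (hstrong : ∀ x : X,
      Tendsto (fun t => S t (J x)) (𝓝[>] (0 : ℝ)) (𝓝 x) ∧
        ContinuousOn (fun t => S t (J x)) (Ioi (0 : ℝ)))
    (F : X → Y)
    (hF : ∀ R : ℝ, 0 < R → ∃ K : ℝ, 0 < K ∧ ∀ x₁ x₂ : X,
      ‖x₁‖ ≤ R → ‖x₂‖ ≤ R → ‖F x₁ - F x₂‖ ≤ K * ‖x₁ - x₂‖) :
    ∀ R : ℝ, 0 < R → ∃ T : ℝ, 0 < T ∧ ∀ u₀ : X, ‖u₀‖ ≤ R →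
      ∃ u : ℝ → X,
        (ContinuousOn u (Icc 0 T) ∧ u 0 = u₀ ∧
          ∀ t ∈ Ioc (0 : ℝ) T,
            (IntervalIntegrable (fun s => S (t - s) (F (u s))) volume 0 t ∧
              u t = S t (J u₀) + ∫ s in (0 : ℝ)..t, S (t - s) (F (u s)))) ∧
        ∀ v : ℝ → X,
          (ContinuousOn v (Icc 0 T) ∧ v 0 = u₀ ∧
            ∀ t ∈ Ioc (0 : ℝ) T,
              (IntervalIntegrable (fun s => S (t - s) (F (v s))) volume 0 t ∧
                v t = S t (J u₀) + ∫ s in (0 : ℝ)..t, S (t - s) (F (v s)))) →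
          ∀ t ∈ Icc (0 : ℝ) T, v t = u t := by
  obtain ⟨C, hC, hS⟩ := hsmooth
  have hjoint := continuousOn_semigroup_apply hsemi hcontr fun x => (hstrong x).2
  have hFc : Continuous F := by
    rw [continuous_iff_continuousAt]
    intro x
    obtain ⟨K, hK, hKF⟩ := hF (‖x‖ + 1) (by positivity)
    rw [ContinuousAt, tendsto_iff_norm_sub_tendsto_zero]
    have hb : Tendsto (fun y => K * ‖y - x‖) (𝓝 x) (𝓝 0) := by
      have : Continuous fun y => K * ‖y - x‖ := by fun_prop
      simpa using this.tendsto x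
    refine squeeze_zero' (Eventually.of_forall fun _ => norm_nonneg _) ?_ hb
    filter_upwards [(continuous_norm.tendsto x).eventually (gt_mem_nhds (lt_add_one ‖x‖))]
      with y hy
    exact hKF y x hy.le (by linarith)
  intro R hR
  obtain ⟨K, hK, hKF⟩ := hF (2 * R) (by positivity)
  -- `M` bounds `F` on the ball of radius `2R`; `T = δ ^ 4` makes the Duhamel estimate small there.
  obtain ⟨M, hM, hMF⟩ : ∃ M : ℝ, 0 < M ∧ ∀ x, ‖x‖ ≤ 2 * R → ‖F x‖ ≤ M := by
    refine ⟨‖F 0‖ + K * (2 * R), by positivity, fun x hx => ?_⟩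
    have h1 := hKF x 0 hx (by simp; positivity)
    have h2 := norm_sub_norm_le (F x) (F 0)
    rw [sub_zero] at h1
    have h3 := mul_le_mul_of_nonneg_left hx hK.le
    linarith
  obtain ⟨δ, hδ, hδ1, hδM, hδK⟩ : ∃ δ : ℝ, 0 < δ ∧ δ ≤ 1 ∧ 4 * C * M * δ ≤ R / 2 ∧
      4 * C * K * δ ≤ 1 / 2 := by
    refine ⟨min 1 (min (R / 2 / (4 * C * M)) (1 / 2 / (4 * C * K))), by positivity,
      min_le_left _ _, ?_, ?_⟩
    · rw [← le_div_iff₀' (by positivity)]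
      exact (min_le_right _ _).trans (min_le_left _ _)
    · rw [← le_div_iff₀' (by positivity)]
      exact (min_le_right _ _).trans (min_le_right _ _)
  have hT : 0 < δ ^ 4 := by positivity
  have hT1 : δ ^ 4 ≤ 1 := pow_le_one₀ hδ.le hδ1
  have hTδ : ∀ t : ℝ, 0 ≤ t → t ≤ δ ^ 4 → t ^ (1 / 4 : ℝ) ≤ δ := by
    intro t ht0 ht
    calc t ^ (1 / 4 : ℝ) ≤ (δ ^ 4) ^ (1 / 4 : ℝ) := by gcongr
      _ = δ := by
        rw [← Real.rpow_natCast, ← Real.rpow_mul hδ.le]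
        norm_num
  generalize δ ^ 4 = T at hT hT1 hTδ
  have hduh : ∀ t ∈ Icc (0 : ℝ) T, ∀ f : ℝ → Y, ∀ N : ℝ, 0 ≤ N → (∀ s ∈ Ioo 0 t, ‖f s‖ ≤ N) →
      ‖∫ s in (0 : ℝ)..t, S (t - s) (f s)‖ ≤ 4 * C * N * δ := fun t ht f N hN hf =>
    (norm_duhamel_le hS ht.1 (ht.2.trans hT1) hf).trans
      (mul_le_mul_of_nonneg_left (hTδ t ht.1 ht.2) (by positivity))
  -- Contraction estimate for two inputs valued in the ball of radius `2R`.
  have hdiff : ∀ t ∈ Icc (0 : ℝ) T, ∀ v w : ℝ → X, ∀ d : ℝ, 0 ≤ d →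
      IntervalIntegrable (fun s => S (t - s) (F (v s))) volume 0 t →
      IntervalIntegrable (fun s => S (t - s) (F (w s))) volume 0 t →
      (∀ s ∈ Ioo 0 t, ‖v s‖ ≤ 2 * R) → (∀ s ∈ Ioo 0 t, ‖w s‖ ≤ 2 * R) →
      (∀ s ∈ Ioo 0 t, ‖v s - w s‖ ≤ d) →
      ‖(∫ s in (0 : ℝ)..t, S (t - s) (F (v s))) - ∫ s in (0 : ℝ)..t, S (t - s) (F (w s))‖
        ≤ d / 2 := by
    intro t ht v w d hd hvi hwi hv hw hvw
    rw [← intervalIntegral.integral_sub hvi hwi]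
    simp only [← map_sub]
    refine (hduh t ht (fun s => F (v s) - F (w s)) (K * d) (by positivity) fun s hs =>
      (hKF _ _ (hv s hs) (hw s hs)).trans
        (mul_le_mul_of_nonneg_left (hvw s hs) hK.le)).trans ?_
    have := mul_le_mul_of_nonneg_right hδK hd
    linarith
  refine ⟨T, hT, fun u₀ hu₀ => ?_⟩
  have horb : ContinuousOn (fun t : ℝ => if t = 0 then u₀ else S t (J u₀)) (Ici 0) :=
    continuousOn_orbit (hstrong u₀).1 (hstrong u₀).2
  have horbR : ∀ t : ℝ, 0 ≤ t → ‖if t = 0 then u₀ else S t (J u₀)‖ ≤ R := by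
    intro t ht
    split_ifs with h
    · exact hu₀
    · exact (hcontr t (lt_of_le_of_ne ht (Ne.symm h)) u₀).trans hu₀
  -- Inputs are extended from `[0, T]` to `ℝ` by constants; the extension is continuous and bounded.
  have hext : ∀ u : C(Icc (0 : ℝ) T, X), Continuous (IccExtend hT.le u) := fun u =>
    u.continuous.Icc_extend'
  have hbdd : ∀ u : C(Icc (0 : ℝ) T, X), ∃ B : ℝ, ∀ s, ‖F (IccExtend hT.le u s)‖ ≤ B := by
    intro u
    obtain ⟨B, hB⟩ := (isCompact_range (hFc.comp u.continuous)).isBounded.exists_norm_le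
    exact ⟨B, fun s => hB _ ⟨projIcc 0 T hT.le s, rfl⟩⟩
  have hint : ∀ u : C(Icc (0 : ℝ) T, X), ∀ t ∈ Icc (0 : ℝ) T,
      IntervalIntegrable (fun s => S (t - s) (F (IccExtend hT.le u s))) volume 0 t := by
    intro u t ht
    obtain ⟨B, hB⟩ := hbdd u
    exact intervalIntegrable_duhamel hjoint hS ht.1 (ht.2.trans hT1)
      (hFc.comp (hext u)).continuousOn fun s _ => hB s
  have hΦc : ∀ u : C(Icc (0 : ℝ) T, X), ContinuousOn (fun t : ℝ =>
      (if t = 0 then u₀ else S t (J u₀)) +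
        ∫ s in (0 : ℝ)..t, S (t - s) (F (IccExtend hT.le u s))) (Icc 0 T) := by
    intro u
    obtain ⟨B, hB⟩ := hbdd u
    exact (horb.mono Icc_subset_Ici_self).add
      ((continuousOn_duhamel hjoint hS (hFc.comp (hext u)) hB).mono (Icc_subset_Icc_right hT1))
  let Φ : C(Icc (0 : ℝ) T, X) → C(Icc (0 : ℝ) T, X) := fun u =>
    ⟨_, continuousOn_iff_continuous_domRestrict.mp (hΦc u)⟩
  have hΦ : ∀ u t, Φ u t = (if (t : ℝ) = 0 then u₀ else S t (J u₀)) +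
      ∫ s in (0 : ℝ)..t, S (t - s) (F (IccExtend hT.le u s)) := fun u t => rfl
  let B : Set C(Icc (0 : ℝ) T, X) := Metric.closedBall 0 (2 * R)
  have hBR : ∀ u ∈ B, ∀ s, ‖IccExtend hT.le u s‖ ≤ 2 * R := by
    intro u hu s
    exact (u.norm_coe_le_norm _).trans (mem_closedBall_zero_iff.mp hu)
  have hmaps : MapsTo Φ B B := by
    intro u hu
    refine mem_closedBall_zero_iff.mpr ((ContinuousMap.norm_le _ (by positivity)).mpr fun t => ?_)
    rw [hΦ]
    have h1 := horbR t t.2.1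
    have h2 := hduh t t.2 (fun s => F (IccExtend hT.le u s)) M hM.le
      fun s _ => hMF _ (hBR u hu s)
    exact (norm_add_le _ _).trans (by linarith)
  have hcontract : ContractingWith (1 / 2) (hmaps.restrict Φ B B) := by
    refine ⟨by norm_num, LipschitzWith.of_dist_le_mul fun u w => ?_⟩
    change dist (Φ u) (Φ w) ≤ _ * dist (u : C(Icc (0 : ℝ) T, X)) w
    rw [ContinuousMap.dist_le (by positivity)]
    intro t
    rw [hΦ, hΦ, dist_add_left, dist_eq_norm]
    refine (hdiff t t.2 _ _ (dist (u : C(Icc (0 : ℝ) T, X)) w) dist_nonneg (hint u t t.2) (hint w t t.2)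
      (fun s _ => hBR u u.2 s) (fun s _ => hBR w w.2 s)
      fun s _ => ?_).trans_eq ?_
    · rw [← dist_eq_norm]
      exact ContinuousMap.dist_apply_le_dist _
    · push_cast; ring
  obtain ⟨u, huB, hfix, -⟩ := hcontract.exists_fixedPoint' Metric.isClosed_closedBall.isComplete
    hmaps (x := 0) (by simp [B]; positivity) (edist_ne_top _ _)
  have huE : ∀ t ∈ Icc (0 : ℝ) T, IccExtend hT.le u t =
      (if t = 0 then u₀ else S t (J u₀)) +
        ∫ s in (0 : ℝ)..t, S (t - s) (F (IccExtend hT.le u s)) := by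
    intro t ht
    rw [IccExtend_of_mem hT.le u ht]
    conv_lhs => rw [← hfix.eq]
    exact hΦ u ⟨t, ht⟩
  refine ⟨IccExtend hT.le u, ⟨(hext u).continuousOn, ?_, fun t ht => ⟨hint u t ⟨ht.1.le, ht.2⟩, ?_⟩⟩,
    ?_⟩
  · simpa using huE 0 ⟨le_rfl, hT.le⟩
  · simpa [ht.1.ne'] using huE t ⟨ht.1.le, ht.2⟩
  · rintro v ⟨hvc, hv0, hv⟩
    have hvE : ∀ t ∈ Icc (0 : ℝ) T, v t = (if t = 0 then u₀ else S t (J u₀)) +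
        ∫ s in (0 : ℝ)..t, S (t - s) (F (v s)) := by
      intro t ht
      rcases eq_or_lt_of_le ht.1 with rfl | hpos
      · simpa using hv0
      · simpa [hpos.ne'] using (hv t ⟨hpos, ht.2⟩).2
    have hvi : ∀ t ∈ Icc (0 : ℝ) T,
        IntervalIntegrable (fun s => S (t - s) (F (v s))) volume 0 t := by
      intro t ht
      rcases eq_or_lt_of_le ht.1 with rfl | hpos
      · exact IntervalIntegrable.refl
      · exact (hv t ⟨hpos, ht.2⟩).1
    have hvR : ∀ t ∈ Icc (0 : ℝ) T, ‖v t‖ ≤ 2 * R := by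
      refine le_of_continuation hR hvc.norm fun t ht hs => ?_
      have h1 := horbR t ht.1
      have h2 := hduh t ht (fun s => F (v s)) M hM.le fun s hs' => hMF _ (hs s hs')
      rw [hvE t ht]
      exact (norm_add_le _ _).trans (by linarith)
    -- At a maximum point of `‖v - u‖` the contraction estimate forces the maximum to vanish.
    obtain ⟨t₁, ht₁, hmax⟩ := isCompact_Icc.exists_isMaxOn ⟨0, le_rfl, hT.le⟩
      (hvc.sub (hext u).continuousOn).norm
    have hmax : ∀ s ∈ Icc (0 : ℝ) T,
        ‖v s - IccExtend hT.le u s‖ ≤ ‖v t₁ - IccExtend hT.le u t₁‖ := fun s hs => hmax hs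
    have hsub : ∀ s ∈ Ioo 0 t₁, s ∈ Icc 0 T := fun s hs => ⟨hs.1.le, hs.2.le.trans ht₁.2⟩
    have hhalf := hdiff t₁ ht₁ v _ _ (norm_nonneg (v t₁ - IccExtend hT.le u t₁)) (hvi t₁ ht₁)
      (hint u t₁ ht₁) (fun s hs => hvR s (hsub s hs)) (fun s _ => hBR u huB s)
      (fun s hs => hmax s (hsub s hs))
    rw [← add_sub_add_left_eq_sub _ _ (if t₁ = 0 then u₀ else S t₁ (J u₀)), ← hvE t₁ ht₁,
      ← huE t₁ ht₁] at hhalf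
    intro t ht
    have := hmax t ht
    rw [← sub_eq_zero, ← norm_le_zero_iff]
    linarith
end

section
/- (Abstract exponential decay scheme.) Let γ, δ, C > 0 with 0 < δ < γ/2, and let ε₀ ≥ 0 satisfy 8C²√(2ε₀) ≤ δ. Let e, h, a, b : [0, ∞) → [0, ∞) be continuous functions with e(t) ≤ h(t), a(t) ≤ b(t), and a(t) ≤ 2ε₀ for all t ≥ 0, and suppose that for all T > 0: (i) e^{2δT} e(T) + 2∫₀^T e^{2δt}(γ h(t) − δ e(t)) dt ≤ e(0) + 2∫₀^T e^{2δt} √(a(t)) · C² h(t) dt, and (ii) e^{2δT} a(T) + 2∫₀^T e^{2δt}(γ b(t) − δ a(t)) dt ≤ a(0) + 8∫₀^T e^{2δt} √(a(t)) · C² h(t) dt. Then sup_{t ≥ 0} e^{2δt}(e(t) + a(t)) + δ∫₀^∞ e^{2δt}(h(t) + b(t)) dt ≤ 2(e(0) + a(0)). -/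
/-!
Write `w t = exp (2δt)`, `H = ∫₀ᵀ w h`, `B = ∫₀ᵀ w b`, `K = ∫₀ᵀ w √a C² h`. Since `e ≤ h` and
`δ < γ/2`, coercivity gives `γ h - δ e ≥ δ h`, and likewise `γ b - δ a ≥ δ b`; smallness gives
`√a C² ≤ δ/8`, so `K ≤ (δ/8) H`. The two hypotheses become
`w(T) e(T) + (7/4) δ H ≤ e(0)` and `w(T) a(T) + 2 δ B ≤ a(0) + δ H`.
Adding them bounds `w(T) (e(T) + a(T))` by `e(0) + a(0)`. Separately they give
`δ H ≤ (4/7) e(0)` and `δ B ≤ a(0)/2 + (2/7) e(0)`, hence `δ (H + B) ≤ e(0) + a(0)`, and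
monotone convergence lets `T → ∞`. Bounding the supremum and the integral separately, each by
`e(0) + a(0)`, yields the factor `2`. Adding the hypotheses before bounding the integral would
only give `δ (H + B) ≤ (4/3) (e(0) + a(0))`, which is too weak.
-/

open MeasureTheory intervalIntegral Set Real

/-- The supremum of `f` and the integral of `g` over `(0, ∞)` may be bounded separately; the
integral bound follows from uniform bounds on `[0, T]` by monotone convergence. -/
lemma iSup_add_lintegral_le {f g : ℝ → ℝ} {δ S : ℝ} (hδ : 0 < δ)
    (hg : ContinuousOn g (Ici 0)) (hg0 : ∀ t, 0 ≤ t → 0 ≤ g t) (hS : 0 ≤ S)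
    (hf : ∀ t, 0 ≤ t → f t ≤ S)
    (hI : ∀ T, 0 < T → δ * ∫ t in (0 : ℝ)..T, g t ≤ S) :
    (⨆ t : ℝ, ⨆ _ : 0 ≤ t, ENNReal.ofReal (f t))
      + ENNReal.ofReal δ * ∫⁻ t in Ioi (0 : ℝ), ENNReal.ofReal (g t)
    ≤ ENNReal.ofReal (2 * S) := by
  rw [two_mul, ENNReal.ofReal_add hS hS]
  refine add_le_add (iSup₂_le fun t ht => ENNReal.ofReal_le_ofReal (hf t ht)) ?_
  have hmeas : AEMeasurable (fun t => ENNReal.ofReal (g t)) (volume.restrict (Ioi (0 : ℝ))) :=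
    ((hg.mono Ioi_subset_Ici_self).aemeasurable measurableSet_Ioi).ennreal_ofReal
  have hlim := (aecover_Iic (μ := volume.restrict (Ioi (0 : ℝ)))
    Filter.tendsto_id).lintegral_tendsto_of_countably_generated hmeas
  refine le_of_tendsto (ENNReal.Tendsto.const_mul hlim (Or.inr ENNReal.ofReal_ne_top)) ?_
  filter_upwards [Filter.eventually_gt_atTop (0 : ℝ)] with T hT
  have hint : IntegrableOn g (Ioc 0 T) :=
    ((hg.mono Icc_subset_Ici_self).integrableOn_Icc).mono_set Ioc_subset_Icc_self
  rw [id, Measure.restrict_restrict measurableSet_Iic, Iic_inter_Ioi,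
    ← ofReal_integral_eq_lintegral_ofReal hint, ← ENNReal.ofReal_mul hδ.le,
    ← intervalIntegral.integral_of_le hT.le]
  · exact ENNReal.ofReal_le_ofReal (hI T hT)
  · exact (ae_restrict_iff' measurableSet_Ioc).2 (.of_forall fun t ht => hg0 t ht.1.le)

/-- Abstract exponential decay scheme: given the weighted Grönwall-type
integral inequalities (i) and (ii) for `e(t) = ‖η‖²_{L²}`, `h(t) = ‖η‖²_{H¹_A}`,
`a(t) = ‖v‖²_{L²}`, `b(t) = ‖v‖²_{H¹}`, with coercivity constant `γ`, Sobolev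
constant `C` and smallness `8C²√(2ε₀) ≤ δ < γ/2`, one gets
`sup_t e^{2δt}(e + a) + δ∫₀^∞ e^{2δt}(h + b) ≤ 2(e(0) + a(0))`. -/
theorem abstract_exponential_decay
    (γ δ C ε₀ : ℝ) (hγ : 0 < γ) (hδ : 0 < δ) (hC : 0 < C)
    (hδγ : δ < γ / 2) (hε₀ : 0 ≤ ε₀)
    (hsmall : 8 * C ^ 2 * Real.sqrt (2 * ε₀) ≤ δ)
    (e h a b : ℝ → ℝ)
    (he : ContinuousOn e (Ici 0)) (hh : ContinuousOn h (Ici 0))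
    (ha : ContinuousOn a (Ici 0)) (hb : ContinuousOn b (Ici 0))
    (hnn : ∀ t : ℝ, 0 ≤ t → 0 ≤ e t ∧ 0 ≤ h t ∧ 0 ≤ a t ∧ 0 ≤ b t)
    (heh : ∀ t : ℝ, 0 ≤ t → e t ≤ h t)
    (hab : ∀ t : ℝ, 0 ≤ t → a t ≤ b t)
    (ha2 : ∀ t : ℝ, 0 ≤ t → a t ≤ 2 * ε₀)
    (hi : ∀ T : ℝ, 0 < T →
      Real.exp (2 * δ * T) * e T
          + 2 * ∫ t in (0 : ℝ)..T, Real.exp (2 * δ * t) * (γ * h t - δ * e t)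
        ≤ e 0 + 2 * ∫ t in (0 : ℝ)..T,
            Real.exp (2 * δ * t) * Real.sqrt (a t) * C ^ 2 * h t)
    (hii : ∀ T : ℝ, 0 < T →
      Real.exp (2 * δ * T) * a T
          + 2 * ∫ t in (0 : ℝ)..T, Real.exp (2 * δ * t) * (γ * b t - δ * a t)
        ≤ a 0 + 8 * ∫ t in (0 : ℝ)..T,
            Real.exp (2 * δ * t) * Real.sqrt (a t) * C ^ 2 * h t) :
    (⨆ t : ℝ, ⨆ _ : 0 ≤ t,
        ENNReal.ofReal (Real.exp (2 * δ * t) * (e t + a t)))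
      + ENNReal.ofReal δ *
          ∫⁻ t in Ioi (0 : ℝ),
            ENNReal.ofReal (Real.exp (2 * δ * t) * (h t + b t))
    ≤ ENNReal.ofReal (2 * (e 0 + a 0)) := by
  have hw : Continuous fun t : ℝ => Real.exp (2 * δ * t) := by fun_prop
  have key : ∀ T : ℝ, 0 < T → Real.exp (2 * δ * T) * (e T + a T) ≤ e 0 + a 0 ∧
      δ * ∫ t in (0 : ℝ)..T, Real.exp (2 * δ * t) * (h t + b t) ≤ e 0 + a 0 := by
    intro T hT
    have hint : ∀ f : ℝ → ℝ, ContinuousOn f (Ici 0) → IntervalIntegrable f volume 0 T :=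
      fun f hf => (hf.mono (by
        rw [uIcc_of_le hT.le]; exact Icc_subset_Ici_self)).intervalIntegrable
    have hwh := hint _ (hw.continuousOn.mul hh)
    have hwb := hint _ (hw.continuousOn.mul hb)
    have hH0 : 0 ≤ ∫ t in (0 : ℝ)..T, Real.exp (2 * δ * t) * h t :=
      integral_nonneg hT.le fun t ht => mul_nonneg (Real.exp_pos _).le (hnn t ht.1).2.1
    have hB0 : 0 ≤ ∫ t in (0 : ℝ)..T, Real.exp (2 * δ * t) * b t :=
      integral_nonneg hT.le fun t ht => mul_nonneg (Real.exp_pos _).le (hnn t ht.1).2.2.2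
    have hcoerH : δ * ∫ t in (0 : ℝ)..T, Real.exp (2 * δ * t) * h t
        ≤ ∫ t in (0 : ℝ)..T, Real.exp (2 * δ * t) * (γ * h t - δ * e t) := by
      rw [← intervalIntegral.integral_const_mul]
      refine integral_mono_on hT.le (hwh.const_mul δ)
        (hint _ (hw.continuousOn.mul ((hh.const_mul γ).sub (he.const_mul δ)))) fun t ht => ?_
      have : δ * h t ≤ γ * h t - δ * e t := by
        nlinarith [heh t ht.1, (hnn t ht.1).2.1]
      nlinarith [Real.exp_pos (2 * δ * t)]
    have hcoerB : δ * ∫ t in (0 : ℝ)..T, Real.exp (2 * δ * t) * b t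
        ≤ ∫ t in (0 : ℝ)..T, Real.exp (2 * δ * t) * (γ * b t - δ * a t) := by
      rw [← intervalIntegral.integral_const_mul]
      refine integral_mono_on hT.le (hwb.const_mul δ)
        (hint _ (hw.continuousOn.mul ((hb.const_mul γ).sub (ha.const_mul δ)))) fun t ht => ?_
      have : δ * b t ≤ γ * b t - δ * a t := by
        nlinarith [hab t ht.1, (hnn t ht.1).2.2.2]
      nlinarith [Real.exp_pos (2 * δ * t)]
    have hcoupling : ∫ t in (0 : ℝ)..T, Real.exp (2 * δ * t) * Real.sqrt (a t) * C ^ 2 * h t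
        ≤ δ / 8 * ∫ t in (0 : ℝ)..T, Real.exp (2 * δ * t) * h t := by
      rw [← intervalIntegral.integral_const_mul]
      refine integral_mono_on hT.le
        (hint _ (((hw.continuousOn.mul ha.sqrt).mul continuousOn_const).mul hh))
        (hwh.const_mul _) fun t ht => ?_
      have hsq : Real.sqrt (a t) * C ^ 2 ≤ δ / 8 := by
        nlinarith [Real.sqrt_le_sqrt (ha2 t ht.1), sq_nonneg C]
      calc Real.exp (2 * δ * t) * Real.sqrt (a t) * C ^ 2 * h t
          = (Real.sqrt (a t) * C ^ 2) * (Real.exp (2 * δ * t) * h t) := by ring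
        _ ≤ δ / 8 * (Real.exp (2 * δ * t) * h t) :=
          mul_le_mul_of_nonneg_right hsq (mul_nonneg (Real.exp_pos _).le (hnn t ht.1).2.1)
    have hsplit : ∫ t in (0 : ℝ)..T, Real.exp (2 * δ * t) * (h t + b t)
        = (∫ t in (0 : ℝ)..T, Real.exp (2 * δ * t) * h t)
          + ∫ t in (0 : ℝ)..T, Real.exp (2 * δ * t) * b t := by
      simp only [mul_add]
      exact intervalIntegral.integral_add hwh hwb
    have h1 := hi T hT
    have h2 := hii T hT
    have hE0 := mul_nonneg (Real.exp_pos (2 * δ * T)).le (hnn T hT.le).1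
    have hA0 := mul_nonneg (Real.exp_pos (2 * δ * T)).le (hnn T hT.le).2.2.1
    have hδH := mul_nonneg hδ.le hH0
    have hδB := mul_nonneg hδ.le hB0
    obtain ⟨he0, -, ha0, -⟩ := hnn 0 le_rfl
    rw [hsplit, mul_add, mul_add]
    constructor <;> linarith
  refine iSup_add_lintegral_le hδ (hw.continuousOn.mul (hh.add hb))
    (fun t ht => mul_nonneg (Real.exp_pos _).le (add_nonneg (hnn t ht).2.1 (hnn t ht).2.2.2))
    (add_nonneg (hnn 0 le_rfl).1 (hnn 0 le_rfl).2.2.1) (fun t ht => ?_) fun T hT => (key T hT).2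
  rcases ht.eq_or_lt with rfl | ht
  · simp
  · exact (key t ht).1
end
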